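/- arXiv:1606.00323 — 3 statements merged into one kernel-verified Lean document; each statement's English description precedes it below -/
import Mathlib

section
/- For every integer g ≥ 2 there are only finitely many isomorphism classes of stable weighted graphs of genus g. -/
/-- A finite multigraph: finite vertex and edge types, each edge carrying a source and a
target vertex (this is an auxiliary orientation); loops and parallel edges are allowed. -/
structure Multigraph where
  V : Type
  E : Type
  [fV : Fintype V]
  [fE : Fintype E]
  [dV : DecidableEq V]
  [dE : DecidableEq E]
  s : E → V
  t : E → V

attribute [instance] Multigraph.fV Multigraph.fE Multigraph.dV Multigraph.dE

namespace Multigraph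

variable (G : Multigraph)

/-- Two vertices are adjacent if some edge joins them. -/
def Adj (a b : G.V) : Prop :=
  ∃ e : G.E, (G.s e = a ∧ G.t e = b) ∨ (G.s e = b ∧ G.t e = a)

/-- A multigraph is connected if it is nonempty and any two vertices are joined by a walk. -/
def Connected : Prop :=
  Nonempty G.V ∧ ∀ a b : G.V, Relation.ReflTransGen G.Adj a b

/-- The graph obtained by deleting the edges in `F` is connected. -/
def ConnectedAvoiding (F : Set G.E) : Prop :=
  ∀ a b : G.V, Relation.ReflTransGen
    (fun x y => ∃ e : G.E, e ∉ F ∧ ((G.s e = x ∧ G.t e = y) ∨ (G.s e = y ∧ G.t e = x))) a b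

/-- The valency of a vertex: the number of half-edges at it (a loop counts twice). -/
def val (v : G.V) : ℕ :=
  (Finset.univ.filter (fun e => G.s e = v)).card + (Finset.univ.filter (fun e => G.t e = v)).card

/-- The number of loops based at a vertex. -/
def loops (v : G.V) : ℕ :=
  (Finset.univ.filter (fun e => G.s e = v ∧ G.t e = v)).card

/-- The number of edges joining two vertices. -/
def edgesBetween (v w : G.V) : ℕ :=
  (Finset.univ.filter (fun e => (G.s e = v ∧ G.t e = w) ∨ (G.s e = w ∧ G.t e = v))).card

/-- The first Betti number `b₁(G) = |E| - |V| + 1` (of a connected graph). -/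
def b1 : ℤ := (Fintype.card G.E : ℤ) - (Fintype.card G.V : ℤ) + 1

/-- The boundary map `∂ : C₁(G,ℤ) → C₀(G,ℤ)`, sending an edge `e` to `t e - s e`. -/
def boundaryHom : (G.E → ℤ) →+ (G.V → ℤ) where
  toFun c := fun v =>
    ∑ e : G.E, c e * ((if G.t e = v then 1 else 0) - (if G.s e = v then 1 else 0))
  map_zero' := by funext v; simp
  map_add' a b := by
    funext v
    simp [Pi.add_apply, add_mul, Finset.sum_add_distrib]

/-- The coboundary map `δ : C₀(G,ℤ) → C₁(G,ℤ)`. -/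
def coboundaryHom : (G.V → ℤ) →+ (G.E → ℤ) where
  toFun f := fun e => f (G.t e) - f (G.s e)
  map_zero' := by funext e; simp
  map_add' a b := by funext e; simp only [Pi.add_apply]; ring

/-- The cycle space `H₁(G,ℤ)`, i.e. the kernel of the boundary map. -/
def cycleSpace : AddSubgroup (G.E → ℤ) := (G.boundaryHom).ker

/-- `C` is the edge set of a closed walk with no repeated vertices except the
initial/terminal one (so a loop is a cycle). -/
def IsCycle (C : Finset G.E) : Prop :=
  ∃ n : ℕ, 0 < n ∧ ∃ (e : Fin n → G.E) (v : Fin (n + 1) → G.V),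
    Function.Injective e ∧
    (∀ i : Fin n, (G.s (e i) = v i.castSucc ∧ G.t (e i) = v i.succ) ∨
        (G.s (e i) = v i.succ ∧ G.t (e i) = v i.castSucc)) ∧
    v 0 = v (Fin.last n) ∧
    (∀ i j : Fin (n + 1), v i = v j →
        i = j ∨ (i = 0 ∧ j = Fin.last n) ∨ (i = Fin.last n ∧ j = 0)) ∧
    C = Finset.image e Finset.univ

/-- A bridge (separating edge) is an edge contained in no cycle. -/
def IsBridge (e : G.E) : Prop := ∀ C : Finset G.E, G.IsCycle C → e ∉ C

def Bridgeless : Prop := ∀ e : G.E, ¬ G.IsBridge e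

/-- `e₁ ∼ e₂` iff every cycle containing `e₁` contains `e₂` and conversely. -/
def Sim (e₁ e₂ : G.E) : Prop :=
  ∀ C : Finset G.E, G.IsCycle C → (e₁ ∈ C ↔ e₂ ∈ C)

/-- The C1-sets: the equivalence classes of the relation `Sim`. -/
def IsC1Set (S : Set G.E) : Prop := ∃ e : G.E, S = {e' | G.Sim e e'}

/-- The multigraph obtained by contracting every edge in `F` (a contracted loop is
simply deleted). -/
noncomputable def contractSet (F : Set G.E) : Multigraph :=
  letI : DecidableEq (Quot (fun a b : G.V => ∃ e ∈ F, G.s e = a ∧ G.t e = b)) :=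
    Classical.decEq _
  { V := Quot (fun a b : G.V => ∃ e ∈ F, G.s e = a ∧ G.t e = b)
    E := {e : G.E // e ∉ F}
    fV := Fintype.ofSurjective (Quot.mk _) (fun q => Quot.exists_rep q)
    fE := Fintype.ofInjective (Subtype.val) Subtype.val_injective
    dV := inferInstance
    dE := inferInstance
    s := fun e => Quot.mk _ (G.s e.1)
    t := fun e => Quot.mk _ (G.t e.1) }

/-- `G^(2)`: the multigraph obtained from `G` by contracting every bridge. -/
noncomputable def contractBridges : Multigraph := G.contractSet {e | G.IsBridge e}

/-- An isomorphism of multigraphs. -/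
structure Iso (G₁ G₂ : Multigraph) where
  vEquiv : G₁.V ≃ G₂.V
  eEquiv : G₁.E ≃ G₂.E
  endpoints : ∀ e : G₁.E,
    (G₂.s (eEquiv e) = vEquiv (G₁.s e) ∧ G₂.t (eEquiv e) = vEquiv (G₁.t e)) ∨
    (G₂.s (eEquiv e) = vEquiv (G₁.t e) ∧ G₂.t (eEquiv e) = vEquiv (G₁.s e))

/-- The group of degree-zero divisors `Div⁰(G)`. -/
def Div0 : AddSubgroup (G.V → ℤ) where
  carrier := {D : G.V → ℤ | ∑ v : G.V, D v = 0}
  zero_mem' := by simp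
  add_mem' := by
    intro a b ha hb
    simp only [Set.mem_setOf_eq, Pi.add_apply] at *
    simp [Finset.sum_add_distrib, ha, hb]
  neg_mem' := by
    intro a ha
    simp only [Set.mem_setOf_eq, Pi.neg_apply] at *
    simp [ha]

/-- The principal divisor `div(f_v)` associated to a vertex `v`. -/
def prinDiv (v : G.V) : G.V → ℤ :=
  fun u => if u = v then 2 * (G.loops v : ℤ) - (G.val v : ℤ) else (G.edgesBetween v u : ℤ)

/-- The group of principal divisors `Prin(G)`. -/
def Prin : AddSubgroup (G.V → ℤ) := AddSubgroup.closure (Set.range G.prinDiv)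

end Multigraph

/-- `Jac(G₁) ≅ Jac(G₂)`: a ℤ-linear isomorphism of the cycle lattices preserving the
bilinear forms for which the edges are orthonormal. -/
def JacIsoGraph (G₁ G₂ : Multigraph) : Prop :=
  ∃ φ : G₁.cycleSpace ≃+ G₂.cycleSpace,
    ∀ x y : G₁.cycleSpace,
      (∑ e : G₂.E, ((φ x : G₂.E → ℤ) e) * ((φ y : G₂.E → ℤ) e)) =
      ∑ e : G₁.E, ((x : G₁.E → ℤ) e) * ((y : G₁.E → ℤ) e)

/-- Cyclic equivalence of two multigraphs: a bijection of the edge sets, together with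
signs, inducing an isomorphism of the cycle spaces. -/
def CyclicallyEquivalent (G₁ G₂ : Multigraph) : Prop :=
  ∃ (σ : G₁.E ≃ G₂.E) (ε : G₁.E → ℤ),
    (∀ e, ε e = 1 ∨ ε e = -1) ∧
    ((fun x : G₁.E → ℤ => fun e₂ : G₂.E => ε (σ.symm e₂) * x (σ.symm e₂)) ''
        (G₁.cycleSpace : Set (G₁.E → ℤ))) = (G₂.cycleSpace : Set (G₂.E → ℤ))

/-- Cyclic equivalence of metric graphs: as for graphs, with a length-preserving bijection
of the edge sets. -/
def MetricCycEquiv (G₁ : Multigraph) (ℓ₁ : G₁.E → ℝ) (G₂ : Multigraph) (ℓ₂ : G₂.E → ℝ) : Prop :=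
  ∃ (σ : G₁.E ≃ G₂.E) (ε : G₁.E → ℤ),
    (∀ e, ℓ₂ (σ e) = ℓ₁ e) ∧
    (∀ e, ε e = 1 ∨ ε e = -1) ∧
    ((fun x : G₁.E → ℤ => fun e₂ : G₂.E => ε (σ.symm e₂) * x (σ.symm e₂)) ''
        (G₁.cycleSpace : Set (G₁.E → ℤ))) = (G₂.cycleSpace : Set (G₂.E → ℤ))

/-- `c` chooses one representative edge in each C1-set (i.e. in each `Sim`-class). -/
def IsC1Choice (H : Multigraph) (c : H.E → H.E) : Prop :=
  (∀ e, H.Sim e (c e)) ∧ ∀ e e' : H.E, H.Sim e e' → c e = c e'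

/-- The graph `G^(3)` obtained by contracting, in each C1-set, all edges except the
chosen one. -/
noncomputable def threeGraph (H : Multigraph) (c : H.E → H.E) : Multigraph :=
  H.contractSet {e | c e ≠ e}

/-- The length function on `G^(3)`: a surviving edge gets the total length of its C1-set. -/
noncomputable def threeLength (H : Multigraph) (ℓ : H.E → ℝ) (c : H.E → H.E) :
    (threeGraph H c).E → ℝ :=
  fun e => ∑ e' ∈ Finset.univ.filter (fun e' => c e' = e.1), ℓ e'

/-- A weighted graph: a multigraph with a weight function on the vertices. -/
structure WeightedGraph where
  G : Multigraph
  w : G.V → ℕ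

namespace WeightedGraph

/-- The genus `g(G,w) = b₁(G) + Σ_v w(v)`. -/
def genus (X : WeightedGraph) : ℤ := X.G.b1 + ∑ v : X.G.V, (X.w v : ℤ)

/-- A weighted graph is stable if it is connected, has genus at least 2, and every
vertex of weight zero has valency at least 3. -/
def Stable (X : WeightedGraph) : Prop :=
  X.G.Connected ∧ 2 ≤ X.genus ∧ ∀ v : X.G.V, X.w v = 0 → 3 ≤ X.G.val v

/-- An isomorphism of weighted graphs. -/
structure Iso (X Y : WeightedGraph) where
  vEquiv : X.G.V ≃ Y.G.V
  eEquiv : X.G.E ≃ Y.G.E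
  endpoints : ∀ e : X.G.E,
    (Y.G.s (eEquiv e) = vEquiv (X.G.s e) ∧ Y.G.t (eEquiv e) = vEquiv (X.G.t e)) ∨
    (Y.G.s (eEquiv e) = vEquiv (X.G.t e) ∧ Y.G.t (eEquiv e) = vEquiv (X.G.s e))
  weight_eq : ∀ v : X.G.V, Y.w (vEquiv v) = X.w v

/-- Contraction of a single edge of a weighted graph: a non-loop edge is contracted by
identifying its two endpoints, the new vertex receiving the sum of the two weights;
a loop is deleted, the weight of its base vertex increasing by 1. -/
noncomputable def contract (X : WeightedGraph) (e₀ : X.G.E) : WeightedGraph :=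
  letI : DecidableEq (Quot (fun a b : X.G.V => a = X.G.s e₀ ∧ b = X.G.t e₀)) :=
    Classical.decEq _
  { G := { V := Quot (fun a b : X.G.V => a = X.G.s e₀ ∧ b = X.G.t e₀)
           E := {e : X.G.E // e ≠ e₀}
           fV := Fintype.ofSurjective (Quot.mk _) (fun q => Quot.exists_rep q)
           fE := inferInstance
           dV := inferInstance
           dE := inferInstance
           s := fun e => Quot.mk _ (X.G.s e.1)
           t := fun e => Quot.mk _ (X.G.t e.1) }
    w := fun q =>
      (∑ v ∈ Finset.univ.filter
          (fun v => Quot.mk (fun a b : X.G.V => a = X.G.s e₀ ∧ b = X.G.t e₀) v = q), X.w v) +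
      (if X.G.s e₀ = X.G.t e₀ ∧
          Quot.mk (fun a b : X.G.V => a = X.G.s e₀ ∧ b = X.G.t e₀) (X.G.s e₀) = q
       then 1 else 0) }

/-- One step: `Y` is (isomorphic to) the contraction of a single edge of `X`. -/
def ContractStep (X Y : WeightedGraph) : Prop :=
  ∃ e : X.G.E, Nonempty ((X.contract e).Iso Y)

/-- `X.ContractsTo Y`: `Y` is obtained from `X` by contracting finitely many edges. -/
def ContractsTo : WeightedGraph → WeightedGraph → Prop :=
  Relation.ReflTransGen ContractStep

/-- A sequence of exactly `n` loop contractions from `X` ending at (a graph isomorphic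
to) `Y`. -/
def LoopContractSeq : ℕ → WeightedGraph → WeightedGraph → Prop
  | 0, X, Y => Nonempty (X.Iso Y)
  | n + 1, X, Y => ∃ e : X.G.E, X.G.s e = X.G.t e ∧ LoopContractSeq n (X.contract e) Y

/-- The weightless graph `G''` obtained by replacing each vertex `v` of positive weight
with a weight-zero vertex carrying `w v` new loops. -/
def blowUp (X : WeightedGraph) : WeightedGraph where
  G := { V := X.G.V
         E := X.G.E ⊕ (Σ v : X.G.V, Fin (X.w v))
         fV := inferInstance
         fE := inferInstance
         dV := inferInstance
         dE := inferInstance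
         s := Sum.elim X.G.s (fun p => p.1)
         t := Sum.elim X.G.t (fun p => p.1) }
  w := fun _ => 0

def totalWeight (X : WeightedGraph) : ℕ := ∑ v : X.G.V, X.w v

/-- The lattice `Λ = H₁(G,ℤ) ⊕ ℤ^(g - b₁(G))` underlying the Jacobian torus of a
weighted graph. -/
abbrev JacLattice (X : WeightedGraph) : Type :=
  ↥X.G.cycleSpace × (Fin X.totalWeight → ℤ)

/-- The bilinear form on the Jacobian lattice: on `H₁(G,ℤ)` the edges are orthonormal,
and the form vanishes on the extra summand. -/
def jacForm (X : WeightedGraph) (p q : X.JacLattice) : ℤ :=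
  ∑ e : X.G.E, (p.1 : X.G.E → ℤ) e * (q.1 : X.G.E → ℤ) e

end WeightedGraph

/-- A pure tropical curve: a multigraph with positive edge lengths. -/
structure PureTropicalCurve where
  G : Multigraph
  ℓ : G.E → ℝ
  pos : ∀ e, 0 < ℓ e

/-- A (weighted) tropical curve: a multigraph with vertex weights and positive edge
lengths. -/
structure TropicalCurve where
  G : Multigraph
  w : G.V → ℕ
  ℓ : G.E → ℝ
  pos : ∀ e, 0 < ℓ e

namespace TropicalCurve

def totalWeight (Γ : TropicalCurve) : ℕ := ∑ v : Γ.G.V, Γ.w v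

/-- The lattice `Λ = H₁(G,ℤ) ⊕ ℤ^(g - b₁(G))` underlying `Jac(Γ)`. -/
abbrev JacLattice (Γ : TropicalCurve) : Type :=
  ↥Γ.G.cycleSpace × (Fin Γ.totalWeight → ℤ)

/-- The bilinear form `( , )_ℓ` on the Jacobian lattice, vanishing on the extra
summand. -/
noncomputable def jacForm (Γ : TropicalCurve) (p q : Γ.JacLattice) : ℝ :=
  ∑ e : Γ.G.E, Γ.ℓ e * ((p.1 : Γ.G.E → ℤ) e : ℝ) * ((q.1 : Γ.G.E → ℤ) e : ℝ)

end TropicalCurve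

/-- `Jac(Γ₁) ≅ Jac(Γ₂)`: a ℤ-linear isomorphism of the lattices preserving the bilinear
forms. -/
def TropJacIso (Γ₁ Γ₂ : TropicalCurve) : Prop :=
  ∃ φ : Γ₁.JacLattice ≃+ Γ₂.JacLattice,
    ∀ p q : Γ₁.JacLattice, Γ₂.jacForm (φ p) (φ q) = Γ₁.jacForm p q

/-! Each vertex `v` of a stable weighted graph satisfies `val v + 2 * w v - 2 ≥ 1`, while by the
handshake identity these numbers sum to `2 * g - 2`. Hence there are at most `2 * g - 2` vertices,
and then `|E| + ∑ w = g + |V| - 1` is at most `3 * g - 3`. Only finitely many graphs, up to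
relabelling vertices and edges, respect these bounds. -/

namespace Multigraph

theorem sum_val (G : Multigraph) : ∑ v : G.V, G.val v = 2 * Fintype.card G.E := by
  simp only [val, Finset.sum_add_distrib]
  rw [← Finset.card_eq_sum_card_fiberwise (fun _ _ => Finset.mem_univ _),
    ← Finset.card_eq_sum_card_fiberwise (fun _ _ => Finset.mem_univ _), Finset.card_univ, two_mul]

theorem Adj.val_pos {G : Multigraph} {a b : G.V} (h : G.Adj a b) : 0 < G.val a := by
  obtain ⟨e, ⟨hs, -⟩ | ⟨-, ht⟩⟩ := h
  · exact Nat.add_pos_left (Finset.card_pos.2 ⟨e, by simpa using hs⟩) _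
  · exact Nat.add_pos_right _ (Finset.card_pos.2 ⟨e, by simpa using ht⟩)

theorem Connected.val_pos {G : Multigraph} (hG : G.Connected) [Nontrivial G.V] (v : G.V) :
    0 < G.val v := by
  obtain ⟨u, hu⟩ := exists_ne v
  obtain rfl | ⟨x, hvx, -⟩ := (hG.2 v u).cases_head
  · exact absurd rfl hu
  · exact hvx.val_pos

end Multigraph

namespace WeightedGraph

theorem sum_val_add_two_mul_weight_sub_two (X : WeightedGraph) :
    ∑ v : X.G.V, ((X.G.val v : ℤ) + 2 * X.w v - 2) = 2 * X.genus - 2 := by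
  have hval : ∑ v : X.G.V, (X.G.val v : ℤ) = 2 * Fintype.card X.G.E := mod_cast X.G.sum_val
  rw [Finset.sum_sub_distrib, Finset.sum_add_distrib, hval, ← Finset.mul_sum, Finset.sum_const,
    Finset.card_univ, nsmul_eq_mul, genus, Multigraph.b1]
  ring

/-- Stability condition `2 w(v) - 2 + val(v) > 0` at every vertex, written without subtraction.
The graph may be disconnected, and no bound on the genus is imposed. -/
def LocallyStable (X : WeightedGraph) : Prop :=
  ∀ v : X.G.V, 3 ≤ X.G.val v + 2 * X.w v

section Stability

variable {X : WeightedGraph}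

theorem Stable.locallyStable (hX : X.Stable) : X.LocallyStable := by
  obtain ⟨hconn, hgenus, hval⟩ := hX
  intro v
  rcases subsingleton_or_nontrivial X.G.V with hV | hV
  · have hsum := X.sum_val_add_two_mul_weight_sub_two
    rw [Fintype.sum_subsingleton _ v] at hsum
    omega
  · have hpos := hconn.val_pos v
    have hthree := hval v
    omega

theorem LocallyStable.card_vertices_le (hX : X.LocallyStable) :
    (Fintype.card X.G.V : ℤ) ≤ 2 * X.genus - 2 := by
  have hone : ∀ v ∈ Finset.univ, 1 ≤ (X.G.val v : ℤ) + 2 * X.w v - 2 := fun v _ => by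
    have := hX v
    omega
  calc (Fintype.card X.G.V : ℤ)
      ≤ ∑ v : X.G.V, ((X.G.val v : ℤ) + 2 * X.w v - 2) := by
        simpa only [Finset.card_univ, nsmul_one] using Finset.card_nsmul_le_sum _ _ 1 hone
    _ = 2 * X.genus - 2 := X.sum_val_add_two_mul_weight_sub_two

theorem LocallyStable.card_edges_add_sum_weight_le (hX : X.LocallyStable) :
    (Fintype.card X.G.E : ℤ) + ∑ v : X.G.V, (X.w v : ℤ) ≤ 3 * X.genus - 3 := by
  have hV := hX.card_vertices_le
  have hgenus : X.genus =
      Fintype.card X.G.E - Fintype.card X.G.V + 1 + ∑ v : X.G.V, (X.w v : ℤ) := rfl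
  linarith

end Stability

/-- The weighted graph with vertices `Fin n`, edges `Fin m`, endpoint maps `s` and `t` and
weight `w`; every weighted graph is isomorphic to one of this form. -/
def ofFin {n m : ℕ} (s t : Fin m → Fin n) (w : Fin n → ℕ) : WeightedGraph where
  G := { V := Fin n, E := Fin m, s := s, t := t }
  w := w

theorem nonempty_iso_ofFin (X : WeightedGraph) {n m : ℕ} (φ : X.G.V ≃ Fin n)
    (ψ : X.G.E ≃ Fin m) :
    Nonempty (X.Iso (ofFin (fun e => φ (X.G.s (ψ.symm e))) (fun e => φ (X.G.t (ψ.symm e)))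
      (fun v => X.w (φ.symm v)))) :=
  ⟨{ vEquiv := φ
     eEquiv := ψ
     endpoints := fun e => Or.inl
      ⟨congrArg (fun e => φ (X.G.s e)) (ψ.symm_apply_apply e),
        congrArg (fun e => φ (X.G.t e)) (ψ.symm_apply_apply e)⟩
     weight_eq := fun v => congrArg X.w (φ.symm_apply_apply v) }⟩

theorem exists_list_iso_of_card_le (a b c : ℕ) :
    ∃ L : List WeightedGraph, ∀ X : WeightedGraph, Fintype.card X.G.V ≤ a →
      Fintype.card X.G.E ≤ b → (∀ v, X.w v ≤ c) → ∃ Y ∈ L, Nonempty (X.Iso Y) := by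
  let Data := Σ n : Fin (a + 1), Σ m : Fin (b + 1),
    (Fin m → Fin n) × (Fin m → Fin n) × (Fin n → Fin (c + 1))
  let toGraph : Data → WeightedGraph := fun ⟨_, _, s, t, w⟩ => ofFin s t (fun v => w v)
  refine ⟨(Finset.univ : Finset Data).toList.map toGraph, fun X hV hE hw => ?_⟩
  let φ := Fintype.equivFin X.G.V
  let ψ := Fintype.equivFin X.G.E
  let data : Data := ⟨⟨_, Nat.lt_succ_of_le hV⟩, ⟨_, Nat.lt_succ_of_le hE⟩,
    fun e => φ (X.G.s (ψ.symm e)), fun e => φ (X.G.t (ψ.symm e)),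
    fun v => ⟨X.w (φ.symm v), Nat.lt_succ_of_le (hw _)⟩⟩
  exact ⟨toGraph data, List.mem_map_of_mem (Finset.mem_toList.2 (Finset.mem_univ data)),
    X.nonempty_iso_ofFin φ ψ⟩

end WeightedGraph

theorem finitely_many_stable_weighted_graphs_general (g : ℤ) :
    ∃ L : List WeightedGraph, ∀ X : WeightedGraph,
      X.LocallyStable → X.genus ≤ g → ∃ Y ∈ L, Nonempty (X.Iso Y) := by
  obtain ⟨L, hL⟩ := WeightedGraph.exists_list_iso_of_card_le
    (2 * g - 2).toNat (3 * g - 3).toNat (3 * g - 3).toNat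
  refine ⟨L, fun X hX hgenus => ?_⟩
  have hvertices := hX.card_vertices_le
  have hedges := hX.card_edges_add_sum_weight_le
  have hweight : ∀ v, (X.w v : ℤ) ≤ ∑ u : X.G.V, (X.w u : ℤ) := fun v =>
    Finset.single_le_sum (f := fun u => (X.w u : ℤ)) (fun _ _ => Nat.cast_nonneg _)
      (Finset.mem_univ v)
  have hsum : 0 ≤ ∑ u : X.G.V, (X.w u : ℤ) := Finset.sum_nonneg fun _ _ => Nat.cast_nonneg _
  refine hL X (by omega) (by omega) fun v => ?_
  have := hweight v
  omega

/-- For every integer `g ≥ 2` there are only finitely many isomorphism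
classes of stable weighted graphs of genus `g`. -/
theorem finitely_many_stable_weighted_graphs (g : ℤ) (hg : 2 ≤ g) :
    ∃ L : List WeightedGraph, ∀ X : WeightedGraph,
      X.Stable → X.genus = g → ∃ Y ∈ L, Nonempty (X.Iso Y) := by
  obtain ⟨L, hL⟩ := finitely_many_stable_weighted_graphs_general g
  exact ⟨L, fun X hX hgenus => hL X hX.locallyStable hgenus.le⟩
end

section
/- Let G be a finite connected multigraph of genus g ≥ 2 in which every vertex has valency ≥ 3, and let v be a vertex of valency N ≥ 4. Then there exists a finite connected multigraph G' of genus g with |E(G')| = |E(G)| + 1, in which every vertex has valency ≥ 3, together with a non-loop edge e of G' whose contraction yields a graph isomorphic to G, such that the two endpoints of e have valencies ⌊N/2⌋ + 1 and ⌈N/2⌉ + 1, both strictly less than N. -/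
/-!
The new graph is obtained by moving `⌈N/2⌉` of the half-edges at `v` to a new vertex joined to `v`
by a new edge. Contracting that edge undoes the splitting, and connectedness is inherited from the
contraction: a function on vertices that is constant along edges factors through any contraction.
-/

namespace Multigraph

section Connected

variable {G G₁ G₂ : Multigraph}

theorem connected_iff_forall_constant :
    G.Connected ↔ Nonempty G.V ∧
      ∀ p : G.V → Prop, (∀ e, p (G.s e) = p (G.t e)) → ∀ a b, p a = p b := by
  refine and_congr_right fun _ => ⟨fun hreach p hp a b => ?_, fun hconst a b => ?_⟩
  · induction hreach a b with
    | refl => rfl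
    | tail _ hadj ih =>
      obtain ⟨e, ⟨rfl, rfl⟩ | ⟨rfl, rfl⟩⟩ := hadj
      · exact ih.trans (hp e)
      · exact ih.trans (hp e).symm
  · have hedge (e : G.E) :
        Relation.ReflTransGen G.Adj a (G.s e) = Relation.ReflTransGen G.Adj a (G.t e) :=
      propext ⟨fun h => h.tail ⟨e, .inl ⟨rfl, rfl⟩⟩, fun h => h.tail ⟨e, .inr ⟨rfl, rfl⟩⟩⟩
    exact (hconst (Relation.ReflTransGen G.Adj a) hedge a b).mp .refl

theorem Connected.of_contractSet {F : Set G.E} (h : (G.contractSet F).Connected) :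
    G.Connected := by
  obtain ⟨⟨q⟩, hconst⟩ := connected_iff_forall_constant.mp h
  refine connected_iff_forall_constant.mpr ⟨⟨q.exists_rep.choose⟩, fun p hp a b => ?_⟩
  have hdescends (x y : G.V) : (∃ e ∈ F, G.s e = x ∧ G.t e = y) → p x = p y := by
    rintro ⟨e, -, rfl, rfl⟩
    exact hp e
  exact hconst (Quot.lift p hdescends) (fun e => hp e.1) (Quot.mk _ a) (Quot.mk _ b)

theorem Connected.of_iso (h : G₂.Connected) (φ : G₁.Iso G₂) : G₁.Connected := by
  obtain ⟨⟨w⟩, hconst⟩ := connected_iff_forall_constant.mp h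
  refine connected_iff_forall_constant.mpr ⟨⟨φ.vEquiv.symm w⟩, fun p hp a b => ?_⟩
  have hedge (e : G₂.E) : p (φ.vEquiv.symm (G₂.s e)) = p (φ.vEquiv.symm (G₂.t e)) := by
    obtain ⟨e, rfl⟩ := φ.eEquiv.surjective e
    obtain ⟨hs, ht⟩ | ⟨hs, ht⟩ := φ.endpoints e
    · simpa [hs, ht] using hp e
    · simpa [hs, ht] using (hp e).symm
  simpa using hconst (p ∘ φ.vEquiv.symm) hedge (φ.vEquiv a) (φ.vEquiv b)

end Connected

section HalfEdge

variable (G : Multigraph)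

theorem val_eq_sum (v : G.V) :
    G.val v = ∑ e, ((if G.s e = v then 1 else 0) + if G.t e = v then 1 else 0) := by
  rw [val, Finset.card_filter, Finset.card_filter, Finset.sum_add_distrib]

/-- The half-edges of a multigraph: `inl e` and `inr e` are the source and target ends of `e`. -/
abbrev HalfEdge : Type := G.E ⊕ G.E

/-- The vertex at which a half-edge is based. -/
def root : G.HalfEdge → G.V := Sum.elim G.s G.t

/-- The set of half-edges based at a vertex. -/
def halfEdgesAt (v : G.V) : Finset G.HalfEdge := {h | G.root h = v}

variable {G}

@[simp]
theorem mem_halfEdgesAt {v : G.V} {h : G.HalfEdge} : h ∈ G.halfEdgesAt v ↔ G.root h = v := by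
  simp [halfEdgesAt]

theorem card_halfEdgesAt (v : G.V) : (G.halfEdgesAt v).card = G.val v := by
  rw [halfEdgesAt, val_eq_sum, Finset.card_filter, Fintype.sum_sum_type, Finset.sum_add_distrib]
  rfl

end HalfEdge

section Split

variable {G : Multigraph} {v : G.V} {H : Finset G.HalfEdge}

/-- The base vertex of an old half-edge after those in `H` have been moved to a new vertex
`none`. -/
def splitRoot (H : Finset G.HalfEdge) (h : G.HalfEdge) : Option G.V :=
  if h ∈ H then none else some (G.root h)

/-- The splitting of the vertex `v` along a set `H` of half-edges, meant to be based at `v`: the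
half-edges in `H` are moved to a new vertex `none`, which is the target of a new edge `none` with
source `v`. -/
def split (G : Multigraph) (v : G.V) (H : Finset G.HalfEdge) : Multigraph where
  V := Option G.V
  E := Option G.E
  s := fun e => e.elim (some v) fun e => splitRoot H (.inl e)
  t := fun e => e.elim none fun e => splitRoot H (.inr e)

theorem card_E_split : Fintype.card (G.split v H).E = Fintype.card G.E + 1 :=
  Fintype.card_option

theorem b1_split : (G.split v H).b1 = G.b1 := by
  have hV : Fintype.card (G.split v H).V = Fintype.card G.V + 1 := Fintype.card_option
  simp only [b1, hV, card_E_split]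
  push_cast
  ring

theorem splitRoot_getD (hH : H ⊆ G.halfEdgesAt v) (h : G.HalfEdge) :
    (splitRoot H h).getD v = G.root h := by
  by_cases hh : h ∈ H
  · simpa [splitRoot, hh] using (mem_halfEdgesAt.mp (hH hh)).symm
  · simp [splitRoot, hh]

/-- Contracting the new edge of a splitting of `G` gives back `G`. -/
def contractSplitIso (hH : H ⊆ G.halfEdgesAt v) :
    ((G.split v H).contractSet {(none : Option G.E)}).Iso G where
  vEquiv :=
    { toFun := Quot.lift (fun x : Option G.V => x.getD v) (by
        rintro _ _ ⟨_, rfl, rfl, rfl⟩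
        rfl)
      invFun := fun u => Quot.mk _ (some u)
      left_inv := by
        rintro ⟨_ | u⟩
        · exact Quot.sound ⟨(none : Option G.E), rfl, rfl, rfl⟩
        · rfl
      right_inv := fun _ => rfl }
  eEquiv :=
    { toFun := fun e => Option.get (α := G.E) e.1 (Option.isSome_iff_ne_none.mpr e.2)
      invFun := fun e => ⟨some e, Option.some_ne_none e⟩
      left_inv := fun _ => Subtype.ext (Option.some_get _)
      right_inv := fun _ => rfl }
  endpoints := by
    rintro ⟨_ | e, he⟩
    · exact absurd rfl he
    · exact .inl ⟨(splitRoot_getD hH (.inl e)).symm, (splitRoot_getD hH (.inr e)).symm⟩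

theorem Connected.split (hconn : G.Connected) (hH : H ⊆ G.halfEdgesAt v) :
    (G.split v H).Connected :=
  (hconn.of_iso (contractSplitIso hH)).of_contractSet

theorem val_split (x : Option G.V) :
    (G.split v H).val x = (if some v = x then 1 else 0) + (if none = x then 1 else 0) +
      (Finset.univ.filter fun h => splitRoot H h = x).card := by
  calc (G.split v H).val x
      = (if some v = x then 1 else 0) + (if none = x then 1 else 0) +
          ∑ e : G.E, ((if splitRoot H (.inl e) = x then 1 else 0) +
            if splitRoot H (.inr e) = x then 1 else 0) :=
        ((G.split v H).val_eq_sum x).trans (Fintype.sum_option _)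
    _ = _ := by rw [Finset.card_filter, Fintype.sum_sum_type, Finset.sum_add_distrib]

theorem val_split_none : (G.split v H).val (none : Option G.V) = H.card + 1 := by
  simp [val_split, splitRoot, add_comm]

theorem val_split_some (u : G.V) :
    (G.split v H).val (some u) = (if v = u then 1 else 0) + (G.halfEdgesAt u \ H).card := by
  have hroot : (Finset.univ.filter fun h => splitRoot H h = some u) = G.halfEdgesAt u \ H := by
    ext h
    simp [splitRoot, and_comm]
  simp [val_split, hroot]

theorem val_split_self (hH : H ⊆ G.halfEdgesAt v) :
    (G.split v H).val (some v) + H.card = G.val v + 1 := by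
  rw [val_split_some, if_pos rfl, add_assoc, Finset.card_sdiff_add_card_eq_card hH,
    card_halfEdgesAt, add_comm]

theorem val_split_of_ne (hH : H ⊆ G.halfEdgesAt v) {u : G.V} (hu : u ≠ v) :
    (G.split v H).val (some u) = G.val u := by
  have hdisj : Disjoint (G.halfEdgesAt u) H :=
    Finset.disjoint_left.mpr fun h hhu hhH =>
      hu ((mem_halfEdgesAt.mp hhu).symm.trans (mem_halfEdgesAt.mp (hH hhH)))
  rw [val_split_some, if_neg hu.symm, zero_add, hdisj.sdiff_eq_left, card_halfEdgesAt]

end Split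

end Multigraph

theorem vertex_splitting_general (G : Multigraph) (hconn : G.Connected) (v : G.V) {m n d : ℕ}
    (hmn : G.val v = m + n) (hm : d ≤ m + 1) (hn : d ≤ n + 1)
    (hval : ∀ u : G.V, u ≠ v → d ≤ G.val u) :
    ∃ G' : Multigraph, G'.Connected ∧ G'.b1 = G.b1 ∧
      Fintype.card G'.E = Fintype.card G.E + 1 ∧ (∀ u : G'.V, d ≤ G'.val u) ∧
      ∃ e : G'.E, G'.s e ≠ G'.t e ∧
        Nonempty ((G'.contractSet {e}).Iso G) ∧
        G'.val (G'.s e) = m + 1 ∧ G'.val (G'.t e) = n + 1 := by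
  obtain ⟨H, hH, hcard⟩ : ∃ H ⊆ G.halfEdgesAt v, H.card = n :=
    Finset.exists_subset_card_eq (by rw [Multigraph.card_halfEdgesAt]; omega)
  have hold : (G.split v H).val (some v) = m + 1 := by
    have := Multigraph.val_split_self hH
    omega
  have hnew : (G.split v H).val (none : Option G.V) = n + 1 := by
    rw [Multigraph.val_split_none, hcard]
  refine ⟨G.split v H, hconn.split hH, Multigraph.b1_split, Multigraph.card_E_split, ?_,
    (none : Option G.E), Option.some_ne_none v, ⟨Multigraph.contractSplitIso hH⟩, hold, hnew⟩
  rintro (_ | u)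
  · exact hn.trans_eq hnew.symm
  · obtain rfl | hu := eq_or_ne u v
    · exact hm.trans_eq hold.symm
    · exact (hval u hu).trans_eq (Multigraph.val_split_of_ne hH hu).symm

/-- In a connected multigraph of genus `g ≥ 2` with all valencies `≥ 3`,
a vertex `v` of valency `N ≥ 4` can be split: there is a connected multigraph `G'` of
genus `g` with one more edge, all valencies `≥ 3`, and a non-loop edge `e` whose
contraction gives back `G`, whose endpoints have valencies `⌊N/2⌋ + 1` and `⌈N/2⌉ + 1`,
both strictly less than `N`. -/
theorem vertex_splitting (G : Multigraph) (g : ℤ) (hconn : G.Connected) (hg : 2 ≤ g)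
    (hgen : G.b1 = g) (hval : ∀ u : G.V, 3 ≤ G.val u)
    (v : G.V) (N : ℕ) (hN : 4 ≤ N) (hvalv : G.val v = N) :
    ∃ G' : Multigraph, G'.Connected ∧ G'.b1 = g ∧
      Fintype.card G'.E = Fintype.card G.E + 1 ∧ (∀ u : G'.V, 3 ≤ G'.val u) ∧
      ∃ e : G'.E, G'.s e ≠ G'.t e ∧
        Nonempty ((G'.contractSet {e}).Iso G) ∧
        G'.val (G'.s e) = N / 2 + 1 ∧ G'.val (G'.t e) = (N + 1) / 2 + 1 ∧
        G'.val (G'.s e) < N ∧ G'.val (G'.t e) < N := by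
  obtain ⟨G', hconn', hb1, hE, hval', e, he, hiso, hs, ht⟩ :=
    vertex_splitting_general G hconn v (m := N / 2) (n := (N + 1) / 2) (d := 3)
      (by omega) (by omega) (by omega) fun u _ => hval u
  exact ⟨G', hconn', hb1.trans hgen, hE, hval', e, he, hiso, hs, ht, by omega, by omega⟩
end

section
/- For every finite connected multigraph G, the Jacobian group Div⁰(G)/Prin(G) is a finite group. -/
section AdjointPair

open LinearMap Module

variable {R M N : Type*} [CommRing R] [AddCommGroup M] [Module R M] [AddCommGroup N] [Module R N]
  {B : LinearMap.BilinForm R M} {C : LinearMap.BilinForm R N} {f : M →ₗ[R] N} {g : N →ₗ[R] M}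

lemma ker_comp_eq_ker_of_isAdjointPair (h : IsAdjointPair B C f g)
    (hB : ∀ x, B x x = 0 → x = 0) : ker (f ∘ₗ g) = ker g := by
  refine le_antisymm (fun y hy => hB (g y) ?_) (ker_le_ker_comp g f)
  have hfg : f (g y) = 0 := hy
  rw [← h, hfg, map_zero, LinearMap.zero_apply]

lemma finrank_range_comp_eq_right_of_isAdjointPair (h : IsAdjointPair B C f g)
    (hB : ∀ x, B x x = 0 → x = 0) : finrank R (range (f ∘ₗ g)) = finrank R (range g) :=
  ((f ∘ₗ g).quotKerEquivRange.symm ≪≫ₗ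
    Submodule.quotEquivOfEq _ _ (ker_comp_eq_ker_of_isAdjointPair h hB) ≪≫ₗ
    g.quotKerEquivRange).finrank_eq

lemma finrank_range_comp_eq_left_of_isAdjointPair [Nontrivial R] [Module.Finite R M]
    [Module.Finite R N] (h : IsAdjointPair B C f g) (h' : IsAdjointPair C B g f)
    (hB : ∀ x, B x x = 0 → x = 0) (hC : ∀ y, C y y = 0 → y = 0) :
    finrank R (range (f ∘ₗ g)) = finrank R (range f) := by
  refine le_antisymm (Submodule.finrank_mono (range_comp_le_range g f)) ?_
  calc finrank R (range f) = finrank R (range (g ∘ₗ f)) :=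
        (finrank_range_comp_eq_right_of_isAdjointPair h' hC).symm
    _ ≤ finrank R (range g) := Submodule.finrank_mono (range_comp_le_range f g)
    _ = finrank R (range (f ∘ₗ g)) := (finrank_range_comp_eq_right_of_isAdjointPair h hB).symm

end AdjointPair

lemma finite_quotient_addSubgroupOf_of_finrank_eq {M : Type*} [AddCommGroup M]
    {A B : AddSubgroup M} [Module.Free ℤ B] [Module.Finite ℤ B] (hAB : A ≤ B)
    (h : Module.finrank ℤ A = Module.finrank ℤ B) : Finite (B ⧸ A.addSubgroupOf B) := by
  refine Submodule.finiteQuotientOfFreeOfRankEq (AddSubgroup.toIntSubmodule (A.addSubgroupOf B)) ?_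
  exact (AddSubgroup.addSubgroupOfEquivOfLe hAB).toIntLinearEquiv.finrank_eq.trans h

lemma sum_smul_single_one {ι R : Type*} [Fintype ι] [DecidableEq ι] [NonAssocSemiring R]
    (x : ι → R) : ∑ i, x i • (Pi.single i 1 : ι → R) = x := by
  ext j
  simp [Pi.single_apply]

namespace Multigraph

variable (G : Multigraph)

lemma boundaryHom_single (e : G.E) :
    G.boundaryHom (Pi.single e 1) = Pi.single (G.t e) 1 - Pi.single (G.s e) 1 := by
  ext v
  simp [boundaryHom, Pi.single_apply, eq_comm]

lemma boundaryHom_dotProduct (c : G.E → ℤ) (f : G.V → ℤ) :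
    G.boundaryHom c ⬝ᵥ f = c ⬝ᵥ G.coboundaryHom f := by
  simp only [boundaryHom, coboundaryHom, AddMonoidHom.coe_mk, ZeroHom.coe_mk, dotProduct,
    Finset.sum_mul]
  rw [Finset.sum_comm]
  simp [mul_assoc, ← Finset.mul_sum, sub_mul]

lemma coboundaryHom_dotProduct (f : G.V → ℤ) (c : G.E → ℤ) :
    G.coboundaryHom f ⬝ᵥ c = f ⬝ᵥ G.boundaryHom c := by
  rw [dotProduct_comm, ← boundaryHom_dotProduct, dotProduct_comm]

lemma finrank_range_boundaryHom_comp_coboundaryHom :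
    Module.finrank ℤ (G.boundaryHom.comp G.coboundaryHom).range =
      Module.finrank ℤ G.boundaryHom.range :=
  finrank_range_comp_eq_left_of_isAdjointPair
    (B := dotProductBilin ℤ ℤ) (C := dotProductBilin ℤ ℤ)
    (f := G.boundaryHom.toIntLinearMap) (g := G.coboundaryHom.toIntLinearMap)
    G.boundaryHom_dotProduct G.coboundaryHom_dotProduct
    (fun _ => dotProduct_self_eq_zero.1) (fun _ => dotProduct_self_eq_zero.1)

lemma boundaryHom_coboundaryHom_single (v : G.V) :
    G.boundaryHom (G.coboundaryHom (Pi.single v 1)) = -G.prinDiv v := by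
  ext u
  simp only [boundaryHom, coboundaryHom, AddMonoidHom.coe_mk, ZeroHom.coe_mk, Pi.neg_apply,
    prinDiv, val, loops, edgesBetween, Finset.card_filter, Pi.single_apply]
  split_ifs with huv
  · -- A loop at `v` has no boundary: `2 * loops` cancels its two half-edges in `val`.
    push_cast
    rw [Finset.mul_sum, ← Finset.sum_add_distrib, ← Finset.sum_sub_distrib,
      ← Finset.sum_neg_distrib]
    exact Finset.sum_congr rfl fun e _ => by grind
  · push_cast
    rw [← Finset.sum_neg_distrib]
    exact Finset.sum_congr rfl fun e _ => by grind

lemma prin_eq_range_boundaryHom_comp_coboundaryHom :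
    G.Prin = (G.boundaryHom.comp G.coboundaryHom).range := by
  refine le_antisymm ((AddSubgroup.closure_le _).2 ?_) ?_
  · rintro _ ⟨v, rfl⟩
    exact ⟨-Pi.single v 1, by simp [boundaryHom_coboundaryHom_single]⟩
  · rintro _ ⟨f, rfl⟩
    rw [← sum_smul_single_one f, map_sum]
    refine sum_mem fun v _ => ?_
    rw [map_zsmul, AddMonoidHom.comp_apply, boundaryHom_coboundaryHom_single]
    exact zsmul_mem (neg_mem (AddSubgroup.subset_closure (Set.mem_range_self v))) _

lemma prin_le_range_boundaryHom : G.Prin ≤ G.boundaryHom.range := by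
  rw [prin_eq_range_boundaryHom_comp_coboundaryHom]
  rintro _ ⟨f, rfl⟩
  exact ⟨G.coboundaryHom f, rfl⟩

lemma range_boundaryHom_le_div0 : G.boundaryHom.range ≤ G.Div0 := by
  rintro _ ⟨c, rfl⟩
  have h_const : G.coboundaryHom 1 = 0 := by ext; simp [coboundaryHom]
  change ∑ v, G.boundaryHom c v = 0
  rw [← dotProduct_one, boundaryHom_dotProduct, h_const, dotProduct_zero]

variable {G}

lemma Adj.single_sub_single_mem_range_boundaryHom {a b : G.V} (h : G.Adj a b) :
    Pi.single b 1 - Pi.single a 1 ∈ G.boundaryHom.range := by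
  obtain ⟨e, ⟨rfl, rfl⟩ | ⟨rfl, rfl⟩⟩ := h
  · exact ⟨Pi.single e 1, G.boundaryHom_single e⟩
  · exact ⟨-Pi.single e 1, by rw [map_neg, boundaryHom_single, neg_sub]⟩

lemma single_sub_single_mem_range_boundaryHom {a b : G.V}
    (h : Relation.ReflTransGen G.Adj a b) :
    Pi.single b 1 - Pi.single a 1 ∈ G.boundaryHom.range := by
  induction h with
  | refl => rw [sub_self]; exact zero_mem _
  | tail _ hbc ih =>
    rw [← sub_add_sub_cancel]
    exact add_mem hbc.single_sub_single_mem_range_boundaryHom ih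

lemma Connected.div0_eq_range_boundaryHom (hG : G.Connected) : G.Div0 = G.boundaryHom.range := by
  refine le_antisymm (fun D hD => ?_) G.range_boundaryHom_le_div0
  have h_deg : ∑ v, D v = 0 := hD
  obtain ⟨q⟩ := hG.1
  have h_sum : D = ∑ v, D v • (Pi.single v 1 - Pi.single q 1 : G.V → ℤ) := by
    simp only [smul_sub, Finset.sum_sub_distrib, ← Finset.sum_smul, h_deg, zero_smul, sub_zero,
      sum_smul_single_one]
  rw [h_sum]
  exact sum_mem fun v _ => zsmul_mem (single_sub_single_mem_range_boundaryHom (hG.2 q v)) _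

end Multigraph

/-- When `G` is disconnected, the range of `∂` consists of the divisors whose degree vanishes on
each connected component of `G`. -/
theorem jacobian_group_finite_general (G : Multigraph) :
    Finite (G.boundaryHom.range ⧸ G.Prin.addSubgroupOf G.boundaryHom.range) := by
  have : Module.Finite ℤ G.boundaryHom.range :=
    inferInstanceAs (Module.Finite ℤ (LinearMap.range G.boundaryHom.toIntLinearMap))
  refine finite_quotient_addSubgroupOf_of_finrank_eq G.prin_le_range_boundaryHom ?_
  rw [G.prin_eq_range_boundaryHom_comp_coboundaryHom,
    G.finrank_range_boundaryHom_comp_coboundaryHom]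

/-- For every finite connected multigraph, the Jacobian group
`Div⁰(G)/Prin(G)` is a finite group. -/
theorem jacobian_group_finite (G : Multigraph) (hG : G.Connected) :
    Finite (G.Div0 ⧸ G.Prin.addSubgroupOf G.Div0) := by
  rw [hG.div0_eq_range_boundaryHom]
  exact jacobian_group_finite_general G
end
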